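/- arXiv:2505.22321 — 6 statements merged into one kernel-verified Lean document; each statement's English description precedes it below -/
import Mathlib

section
/- Let H and G be complex Hilbert spaces, let T and T̃ be linear operators in H, and let Γ0, Γ1 : dom T → G and Γ̃0, Γ̃1 : dom T̃ → G be linear maps such that: (i) the abstract Green identity (Tf, g)_H − (f, T̃g)_H = (Γ1 f, Γ̃0 g)_G − (Γ0 f, Γ̃1 g)_G holds for all f ∈ dom T and g ∈ dom T̃; (ii) Γ0 : dom T → G and Γ̃0 : dom T̃ → G are surjective; (iii) the restrictions A0 := T↾ker Γ0 and Ã0 := T̃↾ker Γ̃0 are densely defined and satisfy A0* = Ã0 and Ã0* = A0; (iv) ker Γ0 ∩ ker Γ1 and ker Γ̃0 ∩ ker Γ̃1 are dense in H. Then the operators S defined by Sf := T̃f on dom S := ker Γ̃0 ∩ ker Γ̃1 and S̃ defined by S̃g := Tg on dom S̃ := ker Γ0 ∩ ker Γ1 are densely defined closed operators in H which form an adjoint pair, one has T* = S and T̃* = S̃ (so {T, T̃} is a core of {S*, S̃*}), and {G, (Γ0, Γ1), (Γ̃0, Γ̃1)} is a generalized boundary triple for {S, S̃}. -/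
/-!
The content is the identity `T* = S` with `S = Tt` restricted to `ker Γt0 ∩ ker Γt1`
(`adjoint_eq_restrictTo`), together with its mirror image for `Tt`, which comes from the conjugated
Green identity (`green_swap`). The inclusion `S ≤ T*` holds because both boundary terms of the Green
identity vanish on `dom S`. Conversely `A0 ≤ T` gives `T* ≤ A0* = At0`, so an element `g` of
`dom T*` lies in `ker Γt0` with `T* g = Tt g`; what is left of the Green identity says that `Γt1 g`
is orthogonal to the range of `Γ0`, which is all of `G`.

Closedness of `S` and `St` is then closedness of adjoints, and the remaining clauses are formal.
-/

open scoped ComplexInnerProductSpace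

noncomputable section

/-- The inner product in the convention of the paper: linear in the *first* argument and
conjugate-linear in the second (the opposite of Mathlib's convention). -/
def pinner {E : Type*} [NormedAddCommGroup E] [InnerProductSpace ℂ E] (x y : E) : ℂ :=
  ⟪y, x⟫

variable {H G : Type*}
  [NormedAddCommGroup H] [InnerProductSpace ℂ H] [CompleteSpace H]
  [NormedAddCommGroup G] [InnerProductSpace ℂ G] [CompleteSpace G]

/-- The restriction of a partially defined linear operator `T` in `H` to a submodule `p` of its
domain, viewed again as a partially defined linear operator in `H`. -/
def LinearPMap.restrictTo (T : H →ₗ.[ℂ] H) (p : Submodule ℂ T.domain) : H →ₗ.[ℂ] H where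
  domain := p.map T.domain.subtype
  toFun := T.toFun ∘ₗ p.subtype ∘ₗ
    (Submodule.equivMapOfInjective T.domain.subtype (Submodule.injective_subtype _)
      p).symm.toLinearMap

/-- `R` is the (everywhere defined, bounded) resolvent of the operator `A` at the point `lam`,
i.e. `R` is a two-sided inverse of `A - lam`. -/
def ResolventAt (A : H →ₗ.[ℂ] H) (lam : ℂ) (R : H →L[ℂ] H) : Prop :=
  (∀ x : A.domain, R (A x - lam • (x : H)) = (x : H)) ∧
  (∀ h : H, ∃ x : A.domain, (x : H) = R h ∧ A x - lam • (x : H) = h)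

/-- `lam` belongs to the resolvent set of `A`: `A - lam` is a bijection of `dom A` onto `H`
with a bounded everywhere defined inverse. -/
def InResolventSet (A : H →ₗ.[ℂ] H) (lam : ℂ) : Prop :=
  ∃ R : H →L[ℂ] H, ResolventAt A lam R

/-- `{G, (Γ0, Γ1), (Γt0, Γt1)}` is a generalized boundary triple for the adjoint pair `{S, St}`
with core `{T, Tt}` of `{S*, St*}`. -/
structure IsGeneralizedBoundaryTriple (S St T Tt : H →ₗ.[ℂ] H)
    (Γ0 Γ1 : T.domain →ₗ[ℂ] G) (Γt0 Γt1 : Tt.domain →ₗ[ℂ] G) : Prop where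
  dense_S : Dense (S.domain : Set H)
  dense_St : Dense (St.domain : Set H)
  closed_S : S.IsClosed
  closed_St : St.IsClosed
  adjoint_pair : ∀ (f : S.domain) (g : St.domain),
    pinner (S f) (g : H) = pinner (f : H) (St g)
  T_le : T ≤ S.adjoint
  Tt_le : Tt ≤ St.adjoint
  T_adjoint : T.adjoint = S
  Tt_adjoint : Tt.adjoint = St
  green : ∀ (f : T.domain) (g : Tt.domain),
    pinner (T f) (g : H) - pinner (f : H) (Tt g)
      = pinner (Γ1 f) (Γt0 g) - pinner (Γ0 f) (Γt1 g)
  surj_Γ0 : Function.Surjective Γ0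
  surj_Γt0 : Function.Surjective Γt0
  A0_adjoint : (T.restrictTo (LinearMap.ker Γ0)).adjoint = Tt.restrictTo (LinearMap.ker Γt0)
  At0_adjoint : (Tt.restrictTo (LinearMap.ker Γt0)).adjoint = T.restrictTo (LinearMap.ker Γ0)

namespace LinearPMap

theorem restrictTo_exists {T : H →ₗ.[ℂ] H} {p : Submodule ℂ T.domain}
    (y : (T.restrictTo p).domain) :
    ∃ z : T.domain, z ∈ p ∧ (z : H) = y ∧ T.restrictTo p y = T z := by
  let e := Submodule.equivMapOfInjective T.domain.subtype (Submodule.injective_subtype _) p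
  refine ⟨e.symm y, (e.symm y).2, ?_, rfl⟩
  exact congrArg Subtype.val (e.apply_symm_apply y)

theorem restrictTo_le (T : H →ₗ.[ℂ] H) (p : Submodule ℂ T.domain) : T.restrictTo p ≤ T := by
  refine ⟨?_, ?_⟩
  · intro y hy
    obtain ⟨z, -, hz, -⟩ := restrictTo_exists (⟨y, hy⟩ : (T.restrictTo p).domain)
    have hz' : (z : H) = y := hz
    exact hz' ▸ z.2
  · intro x y hxy
    obtain ⟨z, -, hz, hTz⟩ := restrictTo_exists x
    rw [hTz, Subtype.ext (hz.trans hxy)]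

end LinearPMap

/-- The Green identity is symmetric under exchanging the two sides of the pair. -/
theorem green_swap {T Tt : H →ₗ.[ℂ] H}
    {Γ0 Γ1 : T.domain →ₗ[ℂ] G} {Γt0 Γt1 : Tt.domain →ₗ[ℂ] G}
    (green : ∀ (f : T.domain) (g : Tt.domain),
      pinner (T f) (g : H) - pinner (f : H) (Tt g)
        = pinner (Γ1 f) (Γt0 g) - pinner (Γ0 f) (Γt1 g))
    (g : Tt.domain) (f : T.domain) :
    pinner (Tt g) (f : H) - pinner (g : H) (T f)
      = pinner (Γt1 g) (Γ0 f) - pinner (Γt0 g) (Γ1 f) := by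
  have h := congrArg (starRingEnd ℂ) (green f g)
  simp only [pinner, map_sub, inner_conj_symm] at h ⊢
  linear_combination -h

/-- On `ker Γt0 ∩ ker Γt1` the boundary terms of the Green identity vanish. -/
theorem restrictTo_isFormalAdjoint {T Tt : H →ₗ.[ℂ] H}
    {Γ0 Γ1 : T.domain →ₗ[ℂ] G} {Γt0 Γt1 : Tt.domain →ₗ[ℂ] G}
    (green : ∀ (f : T.domain) (g : Tt.domain),
      pinner (T f) (g : H) - pinner (f : H) (Tt g)
        = pinner (Γ1 f) (Γt0 g) - pinner (Γ0 f) (Γt1 g)) :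
    T.IsFormalAdjoint (Tt.restrictTo (LinearMap.ker Γt0 ⊓ LinearMap.ker Γt1)) := by
  refine LinearPMap.IsFormalAdjoint.symm fun g f => ?_
  obtain ⟨z, ⟨hz0, hz1⟩, hzg, hTz⟩ := LinearPMap.restrictTo_exists g
  have h := green f z
  rw [LinearMap.mem_ker.1 hz0, LinearMap.mem_ker.1 hz1] at h
  simp only [pinner, inner_zero_left, sub_self] at h
  rw [hTz, ← hzg]
  exact (sub_eq_zero.1 h).symm

/-- Half of the theorem; the other half follows by exchanging the roles of `T` and `Tt`.
If `g ∈ dom T*`, then `g ∈ dom A0* = ker Γt0` and `T* g = Tt g`, so the Green identity reduces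
to `(Γ0 f, Γt1 g) = 0` for every `f`, and surjectivity of `Γ0` gives `Γt1 g = 0`. -/
theorem adjoint_eq_restrictTo {T Tt : H →ₗ.[ℂ] H}
    {Γ0 Γ1 : T.domain →ₗ[ℂ] G} {Γt0 Γt1 : Tt.domain →ₗ[ℂ] G}
    (green : ∀ (f : T.domain) (g : Tt.domain),
      pinner (T f) (g : H) - pinner (f : H) (Tt g)
        = pinner (Γ1 f) (Γt0 g) - pinner (Γ0 f) (Γt1 g))
    (surj0 : Function.Surjective Γ0)
    (hdense0 : Dense (((T.restrictTo (LinearMap.ker Γ0)).domain : Submodule ℂ H) : Set H))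
    (hadj : (T.restrictTo (LinearMap.ker Γ0)).adjoint = Tt.restrictTo (LinearMap.ker Γt0)) :
    T.adjoint = Tt.restrictTo (LinearMap.ker Γt0 ⊓ LinearMap.ker Γt1) := by
  have hle := LinearPMap.restrictTo_le T (LinearMap.ker Γ0)
  have hT : Dense (T.domain : Set H) := hdense0.mono hle.1
  have hformal := LinearPMap.adjoint_isFormalAdjoint hT
  have hS : Tt.restrictTo (LinearMap.ker Γt0 ⊓ LinearMap.ker Γt1) ≤ T.adjoint :=
    (restrictTo_isFormalAdjoint green).le_adjoint hT
  -- Passing to the restriction `A0 ≤ T` enlarges the adjoint.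
  have hA0 : T.adjoint ≤ Tt.restrictTo (LinearMap.ker Γt0) := by
    rw [← hadj]
    refine LinearPMap.IsFormalAdjoint.le_adjoint hdense0 fun f g => ?_
    rw [hle.2 (y := ⟨f, hle.1 f.2⟩) rfl]
    exact hformal.symm _ g
  refine (LinearPMap.eq_of_le_of_domain_eq hS (le_antisymm hS.1 fun g hg => ?_)).symm
  obtain ⟨z, hz0, hzg, hTz⟩ := LinearPMap.restrictTo_exists
    (⟨g, hA0.1 hg⟩ : (Tt.restrictTo (LinearMap.ker Γt0)).domain)
  have hzg' : (z : H) = g := hzg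
  have hval : T.adjoint ⟨g, hg⟩ = Tt z := (hA0.2 rfl).trans hTz
  have hz1 : Γt1 z = 0 := by
    obtain ⟨f, hf⟩ := surj0 (Γt1 z)
    have h := green f z
    have h' := hformal ⟨g, hg⟩ f
    rw [hval] at h'
    rw [LinearMap.mem_ker.1 hz0, hf] at h
    simp only [pinner, inner_zero_left, zero_sub, hzg'] at h
    rw [h', sub_self, zero_eq_neg] at h
    exact inner_self_eq_zero.1 h
  exact ⟨z, ⟨hz0, hz1⟩, hzg⟩

theorem stmt0
    (T Tt : H →ₗ.[ℂ] H)
    (Γ0 Γ1 : T.domain →ₗ[ℂ] G) (Γt0 Γt1 : Tt.domain →ₗ[ℂ] G)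
    (green : ∀ (f : T.domain) (g : Tt.domain),
      pinner (T f) (g : H) - pinner (f : H) (Tt g)
        = pinner (Γ1 f) (Γt0 g) - pinner (Γ0 f) (Γt1 g))
    (surj0 : Function.Surjective Γ0) (surjt0 : Function.Surjective Γt0)
    (hdense0 : Dense (((T.restrictTo (LinearMap.ker Γ0)).domain : Submodule ℂ H) : Set H))
    (hdenset0 : Dense (((Tt.restrictTo (LinearMap.ker Γt0)).domain : Submodule ℂ H) : Set H))
    (hadj : (T.restrictTo (LinearMap.ker Γ0)).adjoint = Tt.restrictTo (LinearMap.ker Γt0))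
    (hadjt : (Tt.restrictTo (LinearMap.ker Γt0)).adjoint = T.restrictTo (LinearMap.ker Γ0))
    (hd : Dense (((T.restrictTo (LinearMap.ker Γ0 ⊓ LinearMap.ker Γ1)).domain :
        Submodule ℂ H) : Set H))
    (hdt : Dense (((Tt.restrictTo (LinearMap.ker Γt0 ⊓ LinearMap.ker Γt1)).domain :
        Submodule ℂ H) : Set H)) :
    IsGeneralizedBoundaryTriple
      (Tt.restrictTo (LinearMap.ker Γt0 ⊓ LinearMap.ker Γt1))
      (T.restrictTo (LinearMap.ker Γ0 ⊓ LinearMap.ker Γ1))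
      T Tt Γ0 Γ1 Γt0 Γt1 := by
  have hTadj := adjoint_eq_restrictTo green surj0 hdense0 hadj
  have hTtadj := adjoint_eq_restrictTo (green_swap green) surjt0 hdenset0 hadjt
  have hT := hdense0.mono (LinearPMap.restrictTo_le T _).1
  have hTt := hdenset0.mono (LinearPMap.restrictTo_le Tt _).1
  have hformal := restrictTo_isFormalAdjoint green
  have hformalt := restrictTo_isFormalAdjoint (green_swap green)
  refine ⟨hdt, hd, hTadj ▸ LinearPMap.adjoint_isClosed hT,
    hTtadj ▸ LinearPMap.adjoint_isClosed hTt, fun f g => ?_, hformal.symm.le_adjoint hdt,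
    hformalt.symm.le_adjoint hd, hTadj, hTtadj, green, surj0, surjt0, hadj, hadjt⟩
  have hle := LinearPMap.restrictTo_le T (LinearMap.ker Γ0 ⊓ LinearMap.ker Γ1)
  simp only [pinner]
  rw [hle.2 (y := ⟨g, hle.1 g.2⟩) rfl]
  exact (hformal ⟨g, hle.1 g.2⟩ f).symm

end
end

section
/- Let {G, (Γ0, Γ1), (Γ̃0, Γ̃1)} be a generalized boundary triple for the adjoint pair {S, S̃} with core {T, T̃} of {S*, S̃*}. Then the set {(Γ0 f, Γ1 f) : f ∈ dom T} is dense in G × G, and likewise the set {(Γ̃0 g, Γ̃1 g) : g ∈ dom T̃} is dense in G × G. -/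
/-!
Let `(a, b)` be orthogonal to every pair `(Γ0 f, Γ1 f)`. Choose `g ∈ dom Tt` with `Γt0 g = b`,
which is possible as `Γt0` is surjective. For `f ∈ ker Γ0` orthogonality gives `(Γ1 f, b) = 0`, so
both terms on the right of the Green identity vanish and `(T f, g) = (f, Tt g)`. Hence `g` lies in
the domain of `A0* = At0`, that is `Γt0 g = 0`, so `b = 0`. Now `a` is orthogonal to the range of
the surjective map `Γ0`, so `a = 0`. This is `eq_zero_of_orthogonal`, and
`dense_range_boundary` turns it into density. The definition of a generalized boundary triple is
symmetric under exchanging the two sides (`IsGeneralizedBoundaryTriple.symm`), which gives the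
second density claim.
-/

open scoped ComplexInnerProductSpace

noncomputable section

variable {H G : Type*}
  [NormedAddCommGroup H] [InnerProductSpace ℂ H] [CompleteSpace H]
  [NormedAddCommGroup G] [InnerProductSpace ℂ G] [CompleteSpace G]

lemma pinner_conj {E : Type*} [NormedAddCommGroup E] [InnerProductSpace ℂ E] (x y : E) :
    (starRingEnd ℂ) (pinner x y) = pinner y x :=
  inner_conj_symm _ _

/-- Every element of the domain of the restriction comes from `p`, and the restriction acts as
`T` there; this hides the equivalence used to define `LinearPMap.restrictTo`. -/
lemma LinearPMap.restrictTo_spec (T : H →ₗ.[ℂ] H) (p : Submodule ℂ T.domain)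
    (x : (T.restrictTo p).domain) :
    ∃ f : T.domain, f ∈ p ∧ (f : H) = x ∧ T.restrictTo p x = T f := by
  let e := Submodule.equivMapOfInjective T.domain.subtype (Submodule.injective_subtype _) p
  refine ⟨(e.symm x : T.domain), (e.symm x).2, ?_, rfl⟩
  exact congrArg Subtype.val (e.apply_symm_apply x)

/-- Exchanging the roles of `T` and `Tt` yields a generalized boundary triple for `{St, S}`. -/
lemma IsGeneralizedBoundaryTriple.symm {S St T Tt : H →ₗ.[ℂ] H}
    {Γ0 Γ1 : T.domain →ₗ[ℂ] G} {Γt0 Γt1 : Tt.domain →ₗ[ℂ] G}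
    (h : IsGeneralizedBoundaryTriple S St T Tt Γ0 Γ1 Γt0 Γt1) :
    IsGeneralizedBoundaryTriple St S Tt T Γt0 Γt1 Γ0 Γ1 where
  dense_S := h.dense_St
  dense_St := h.dense_S
  closed_S := h.closed_St
  closed_St := h.closed_S
  adjoint_pair f g := by
    have := congrArg (starRingEnd ℂ) (h.adjoint_pair g f)
    simpa only [pinner_conj] using this.symm
  T_le := h.Tt_le
  Tt_le := h.T_le
  T_adjoint := h.Tt_adjoint
  Tt_adjoint := h.T_adjoint
  green f g := by
    have := congrArg (starRingEnd ℂ) (h.green g f)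
    simp only [map_sub, pinner_conj] at this
    linear_combination -this
  surj_Γ0 := h.surj_Γt0
  surj_Γt0 := h.surj_Γ0
  A0_adjoint := h.At0_adjoint
  At0_adjoint := h.A0_adjoint

lemma eq_zero_of_orthogonal {S St T Tt : H →ₗ.[ℂ] H}
    {Γ0 Γ1 : T.domain →ₗ[ℂ] G} {Γt0 Γt1 : Tt.domain →ₗ[ℂ] G}
    (h : IsGeneralizedBoundaryTriple S St T Tt Γ0 Γ1 Γt0 Γt1) {a b : G}
    (hab : ∀ f : T.domain, pinner (Γ0 f) a + pinner (Γ1 f) b = 0) : a = 0 ∧ b = 0 := by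
  have hb : b = 0 := by
    obtain ⟨g, rfl⟩ := h.surj_Γt0 b
    have hg : (g : H) ∈ (T.restrictTo (LinearMap.ker Γ0)).adjoint.domain := by
      refine LinearPMap.mem_adjoint_domain_of_exists _ ⟨Tt g, fun x => ?_⟩
      obtain ⟨f, hf, hfx, hTf⟩ := T.restrictTo_spec _ x
      rw [hTf, ← hfx]
      have hf0 : Γ0 f = 0 := hf
      have h1 := hab f
      have h2 := h.green f g
      simp only [pinner, hf0, inner_zero_right] at h1 h2
      linear_combination -h1 - h2
    rw [h.A0_adjoint] at hg
    obtain ⟨g', hg', hgg'⟩ := hg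
    obtain rfl : g' = g := Subtype.ext hgg'
    exact hg'
  subst hb
  obtain ⟨f, rfl⟩ := h.surj_Γ0 a
  have := hab f
  simp only [pinner, inner_zero_left, add_zero, inner_self_eq_zero] at this
  exact ⟨this, rfl⟩

lemma dense_range_boundary {S St T Tt : H →ₗ.[ℂ] H}
    {Γ0 Γ1 : T.domain →ₗ[ℂ] G} {Γt0 Γt1 : Tt.domain →ₗ[ℂ] G}
    (h : IsGeneralizedBoundaryTriple S St T Tt Γ0 Γ1 Γt0 Γt1) :
    Dense (Set.range (fun f : T.domain => (Γ0 f, Γ1 f)) : Set (G × G)) := by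
  -- `G × G` carries the sup norm, so orthogonality is used in `WithLp 2 (G × G)`, which has the
  -- same topology.
  let L : T.domain →ₗ[ℂ] WithLp 2 (G × G) :=
    (WithLp.linearEquiv 2 ℂ (G × G)).symm.toLinearMap ∘ₗ Γ0.prod Γ1
  have hL : Dense (LinearMap.range L : Set (WithLp 2 (G × G))) := by
    rw [Submodule.dense_iff_topologicalClosure_eq_top, Submodule.topologicalClosure_eq_top_iff,
      Submodule.eq_bot_iff]
    intro x hx
    obtain ⟨h1, h2⟩ := eq_zero_of_orthogonal h (a := x.fst) (b := x.snd) fun f =>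
      (Submodule.mem_orthogonal' _ x).1 hx (L f) ⟨f, rfl⟩
    exact WithLp.ofLp_injective 2 (Prod.ext h1 h2)
  have := (WithLp.ofLp_surjective 2).denseRange.dense_image
    (WithLp.prod_continuous_ofLp 2 G G) hL
  rwa [LinearMap.coe_range, ← Set.range_comp] at this

theorem stmt2
    (S St T Tt : H →ₗ.[ℂ] H)
    (Γ0 Γ1 : T.domain →ₗ[ℂ] G) (Γt0 Γt1 : Tt.domain →ₗ[ℂ] G)
    (hgbt : IsGeneralizedBoundaryTriple S St T Tt Γ0 Γ1 Γt0 Γt1)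
    :
    Dense (Set.range (fun f : T.domain => (Γ0 f, Γ1 f)) : Set (G × G)) ∧
    Dense (Set.range (fun g : Tt.domain => (Γt0 g, Γt1 g)) : Set (G × G)) := by
  exact ⟨dense_range_boundary hgbt, dense_range_boundary hgbt.symm⟩

end
end

section
/- Let {G, (Γ0, Γ1), (Γ̃0, Γ̃1)} be a generalized boundary triple for the adjoint pair {S, S̃} with core {T, T̃} of {S*, S̃*}, and assume ρ(A0) ≠ ∅. Then for every λ ∈ ρ(A0) the restriction of Γ0 to ker(T − λ) = {f ∈ dom T : Tf = λf} is a bijection from ker(T − λ) onto G, and its inverse γ(λ) := (Γ0↾ker(T − λ))^{-1} is an everywhere defined bounded operator from G to H; that is, there exists C ≥ 0 such that ‖f‖_H ≤ C ‖Γ0 f‖_G for all f ∈ ker(T − λ). Analogously, for every μ ∈ ρ(Ã0) the restriction of Γ̃0 to ker(T̃ − μ) is a bijection onto G with bounded inverse γ̃(μ). -/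
/-!
For `lam ∈ ρ(A0)` one has `dom T = dom A0 ∔ ker (T - lam)`: subtracting from `u ∈ dom T` the vector
`(A0 - lam)⁻¹ (T - lam) u` lands in `ker (T - lam)` without changing `Γ0 u`, and
`ker (T - lam) ∩ ker Γ0 = ker (A0 - lam) = 0`. Hence `Γ0` is a bijection from `ker (T - lam)`
onto `G`.

Boundedness of the inverse comes from the Green identity. As `Ã0 = A0*`, the operator
`Ã0 - conj lam` is surjective (`adjoint_sub_surjective`), and if `(Ã0 - conj lam) k = h`, then the
identity reads `(f, h) = (Γ0 f, Γ̃1 k)` for `f ∈ ker (T - lam)`. Thus the set of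
`f ∈ ker (T - lam)` with `‖Γ0 f‖ ≤ 1` is weakly bounded, and the uniform boundedness principle
makes it norm bounded (`gamma_field`). The statement for `Ã0` follows by exchanging the two
operators, up to conjugating the Green identity.
-/

open scoped ComplexInnerProductSpace

noncomputable section

variable {H G : Type*}
  [NormedAddCommGroup H] [InnerProductSpace ℂ H] [CompleteSpace H]
  [NormedAddCommGroup G] [InnerProductSpace ℂ G] [CompleteSpace G]

/-- The elements of `dom (T.restrictTo p)` are the `u ∈ dom T` lying in `p`. -/
theorem LinearPMap.exists_of_restrictTo (T : H →ₗ.[ℂ] H) (p : Submodule ℂ T.domain)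
    (x : (T.restrictTo p).domain) :
    ∃ u : T.domain, u ∈ p ∧ (u : H) = x ∧ T.restrictTo p x = T u := by
  let e := Submodule.equivMapOfInjective T.domain.subtype (Submodule.injective_subtype _) p
  refine ⟨(e.symm x : p), (e.symm x).2, ?_, rfl⟩
  exact congrArg Subtype.val (e.apply_symm_apply x)

theorem LinearPMap.restrictTo_of_mem (T : H →ₗ.[ℂ] H) (p : Submodule ℂ T.domain)
    (u : T.domain) (hu : u ∈ p) :
    ∃ x : (T.restrictTo p).domain, (x : H) = u ∧ T.restrictTo p x = T u := by
  let x : (T.restrictTo p).domain := ⟨u, Submodule.mem_map_of_mem hu⟩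
  obtain ⟨v, -, hv, hTv⟩ := T.exists_of_restrictTo p x
  obtain rfl : v = u := Subtype.ext hv
  exact ⟨x, rfl, hTv⟩

/-- Operators that are mutually adjoint are densely defined. Mathlib's adjoint of an operator
with non-dense domain is zero on its domain, so that the adjoint of this adjoint would be
everywhere defined. -/
theorem dense_domain_of_adjoint_adjoint (A B : H →ₗ.[ℂ] H) (hAB : A.adjoint = B)
    (hBA : B.adjoint = A) : Dense (A.domain : Set H) := by
  by_contra h
  have hB : ∀ x, B x = 0 := by
    subst hAB
    exact fun x => LinearPMap.adjoint_apply_of_not_dense h x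
  have htop : ∀ y : H, y ∈ A.domain := by
    intro y
    rw [← hBA]
    exact LinearPMap.mem_adjoint_domain_of_exists y ⟨0, fun x => by rw [hB x]; simp⟩
  exact h (fun y => subset_closure (htop y))

/-- If `lam ∈ ρ(A)`, then `A* - conj lam` is surjective: a preimage of `h` is `R* h`, where `R` is
the resolvent of `A` at `lam`. -/
theorem adjoint_sub_surjective (A : H →ₗ.[ℂ] H) (hA : Dense (A.domain : Set H)) (lam : ℂ)
    (hlam : InResolventSet A lam) (h : H) :
    ∃ k : A.adjoint.domain, A.adjoint k - (starRingEnd ℂ lam) • (k : H) = h := by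
  obtain ⟨R, hR, -⟩ := hlam
  set k : H := ContinuousLinearMap.adjoint R h with hk
  have key : ∀ x : A.domain, ⟪h + (starRingEnd ℂ lam) • k, (x : H)⟫ = ⟪k, A x⟫ := by
    intro x
    have h1 : ⟪k, A x - lam • (x : H)⟫ = ⟪h, (x : H)⟫ := by
      rw [hk, ContinuousLinearMap.adjoint_inner_left, hR x]
    rw [inner_sub_right, inner_smul_right] at h1
    rw [inner_add_left, inner_smul_left, Complex.conj_conj, ← h1]
    ring
  refine ⟨⟨k, LinearPMap.mem_adjoint_domain_of_exists k ⟨_, key⟩⟩, ?_⟩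
  rw [LinearPMap.adjoint_apply_eq hA _ key]
  simp

/-- One half of the theorem. It uses only the Green identity, surjectivity of `Γ0` and the mutual
adjointness of `A0` and `Ã0`, hypotheses that are invariant under exchanging the roles of
`(T, Γ0, Γ1)` and `(Tt, Γt0, Γt1)`. -/
theorem gamma_field (T Tt : H →ₗ.[ℂ] H)
    (Γ0 Γ1 : T.domain →ₗ[ℂ] G) (Γt0 Γt1 : Tt.domain →ₗ[ℂ] G)
    (green : ∀ (f : T.domain) (g : Tt.domain),
      pinner (T f) (g : H) - pinner (f : H) (Tt g)
        = pinner (Γ1 f) (Γt0 g) - pinner (Γ0 f) (Γt1 g))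
    (surj : Function.Surjective Γ0)
    (hadj : (T.restrictTo (LinearMap.ker Γ0)).adjoint = Tt.restrictTo (LinearMap.ker Γt0))
    (hadj' : (Tt.restrictTo (LinearMap.ker Γt0)).adjoint = T.restrictTo (LinearMap.ker Γ0))
    (lam : ℂ) (hlam : InResolventSet (T.restrictTo (LinearMap.ker Γ0)) lam) :
    (∀ f g : T.domain, T f = lam • (f : H) → T g = lam • (g : H) → Γ0 f = Γ0 g → f = g) ∧
      (∀ h : G, ∃ f : T.domain, T f = lam • (f : H) ∧ Γ0 f = h) ∧
      (∃ C : ℝ, 0 ≤ C ∧ ∀ f : T.domain, T f = lam • (f : H) → ‖(f : H)‖ ≤ C * ‖Γ0 f‖) := by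
  have hsurj := adjoint_sub_surjective _ (dense_domain_of_adjoint_adjoint _ _ hadj hadj') lam hlam
  rw [hadj] at hsurj
  obtain ⟨R, hR, hR'⟩ := hlam
  have hinj : ∀ f : T.domain, T f = lam • (f : H) → Γ0 f = 0 → f = 0 := by
    intro f hf h0
    obtain ⟨x, hx, hTx⟩ := T.restrictTo_of_mem _ f (LinearMap.mem_ker.2 h0)
    have := hR x
    rw [hTx, hx, hf, sub_self, map_zero] at this
    exact Subtype.ext this.symm
  refine ⟨fun f g hf hg hfg => ?_, fun h => ?_, ?_⟩
  · refine sub_eq_zero.1 (hinj (f - g) ?_ ?_)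
    · rw [LinearPMap.map_sub, hf, hg, Submodule.coe_sub, smul_sub]
    · rw [map_sub, hfg, sub_self]
  · -- Correct an arbitrary preimage `u` of `h` by `(A0 - lam)⁻¹ (T - lam) u ∈ ker Γ0`.
    obtain ⟨u, rfl⟩ := surj h
    obtain ⟨x, -, hx⟩ := hR' (T u - lam • (u : H))
    obtain ⟨v, hv, hvx, hTv⟩ := T.exists_of_restrictTo _ x
    rw [hTv, ← hvx] at hx
    refine ⟨u - v, ?_, ?_⟩
    · rw [LinearPMap.map_sub, Submodule.coe_sub, smul_sub, sub_eq_sub_iff_sub_eq_sub, ← hx]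
    · rw [map_sub, LinearMap.mem_ker.1 hv, sub_zero]
  · -- The Green identity gives `(f, h) = (Γ0 f, Γ̃1 k)` whenever `(Ã0 - conj lam) k = h`.
    have hpt : ∀ h : H, ∃ w : G, ∀ f : T.domain, T f = lam • (f : H) →
        ⟪h, (f : H)⟫ = ⟪w, Γ0 f⟫ := by
      intro h
      obtain ⟨x, hx⟩ := hsurj h
      obtain ⟨k, hk, hkx, hTk⟩ := Tt.exists_of_restrictTo _ x
      rw [hTk, ← hkx] at hx
      refine ⟨Γt1 k, fun f hf => ?_⟩
      have hg := green f k
      simp only [pinner, LinearMap.mem_ker.1 hk, inner_zero_left, hf, inner_smul_right] at hg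
      rw [← hx, inner_sub_left, inner_smul_left, Complex.conj_conj]
      linear_combination -hg
    -- The functionals `(·, f)` with `f ∈ ker (T - lam)`, `‖Γ0 f‖ ≤ 1`, are pointwise bounded.
    let ι := {f : T.domain // T f = lam • (f : H) ∧ ‖Γ0 f‖ ≤ 1}
    obtain ⟨C, hC⟩ := banach_steinhaus (g := fun f : ι => innerSL ℂ ((f : T.domain) : H))
      (fun h => by
        obtain ⟨w, hw⟩ := hpt h
        refine ⟨‖w‖, fun f => ?_⟩
        rw [innerSL_apply_apply, norm_inner_symm, hw f f.2.1]
        exact (norm_inner_le_norm _ _).trans (mul_le_of_le_one_right (norm_nonneg _) f.2.2))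
    simp only [innerSL_apply_norm] at hC
    refine ⟨C, (norm_nonneg _).trans (hC ⟨0, by simp, by simp⟩), fun f hf => ?_⟩
    rcases eq_or_ne (Γ0 f) 0 with h0 | h0
    · rw [hinj f hf h0]; simp
    · have hpos : 0 < ‖Γ0 f‖ := norm_pos_iff.2 h0
      have := hC ⟨((‖Γ0 f‖⁻¹ : ℝ) : ℂ) • f, by
        rw [LinearPMap.map_smul, hf, Submodule.coe_smul, smul_comm], by
        rw [map_smul, norm_smul, Complex.norm_real, norm_inv, norm_norm,
          inv_mul_cancel₀ hpos.ne']⟩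
      rw [Submodule.coe_smul, norm_smul, Complex.norm_real, norm_inv, norm_norm,
        inv_mul_le_iff₀ hpos] at this
      linarith

theorem stmt6
    (S St T Tt : H →ₗ.[ℂ] H)
    (Γ0 Γ1 : T.domain →ₗ[ℂ] G) (Γt0 Γt1 : Tt.domain →ₗ[ℂ] G)
    (hgbt : IsGeneralizedBoundaryTriple S St T Tt Γ0 Γ1 Γt0 Γt1)
    (lam mu : ℂ)
    (hlam : InResolventSet (T.restrictTo (LinearMap.ker Γ0)) lam)
    (hmu : InResolventSet (Tt.restrictTo (LinearMap.ker Γt0)) mu) :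
    ((∀ f g : T.domain, T f = lam • (f : H) → T g = lam • (g : H) → Γ0 f = Γ0 g → f = g) ∧
      (∀ h : G, ∃ f : T.domain, T f = lam • (f : H) ∧ Γ0 f = h) ∧
      (∃ C : ℝ, 0 ≤ C ∧ ∀ f : T.domain, T f = lam • (f : H) → ‖(f : H)‖ ≤ C * ‖Γ0 f‖)) ∧
    ((∀ f g : Tt.domain, Tt f = mu • (f : H) → Tt g = mu • (g : H) → Γt0 f = Γt0 g → f = g) ∧
      (∀ h : G, ∃ g : Tt.domain, Tt g = mu • (g : H) ∧ Γt0 g = h) ∧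
      (∃ C : ℝ, 0 ≤ C ∧ ∀ g : Tt.domain, Tt g = mu • (g : H) → ‖(g : H)‖ ≤ C * ‖Γt0 g‖)) := by
  refine ⟨gamma_field T Tt Γ0 Γ1 Γt0 Γt1 hgbt.green hgbt.surj_Γ0 hgbt.A0_adjoint
    hgbt.At0_adjoint lam hlam, gamma_field Tt T Γt0 Γt1 Γ0 Γ1 (fun g f => ?_) hgbt.surj_Γt0
    hgbt.At0_adjoint hgbt.A0_adjoint mu hmu⟩
  -- The Green identity for the exchanged roles is minus the conjugate of the given one.
  have h := congrArg (starRingEnd ℂ) (hgbt.green f g)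
  simp only [pinner, map_sub, inner_conj_symm] at h ⊢
  linear_combination -h

end
end

section
/- Let {G, (Γ0, Γ1), (Γ̃0, Γ̃1)} be a generalized boundary triple for the adjoint pair {S, S̃} with core {T, T̃} of {S*, S̃*}, assume ρ(A0) ≠ ∅, and let γ, γ̃ be the associated γ-fields. Then for every λ ∈ ρ(A0) the map h ↦ Γ̃1 (Ã0 − λ̄)^{-1} h is an everywhere defined bounded operator from H to G and coincides with the Hilbert space adjoint γ(λ)*, i.e., (γ(λ)g, h)_H = (g, Γ̃1 (Ã0 − λ̄)^{-1} h)_G for all g ∈ G and h ∈ H. Analogously, for every μ ∈ ρ(Ã0) the map h ↦ Γ1 (A0 − μ̄)^{-1} h is an everywhere defined bounded operator from H to G and (γ̃(μ)g, h)_H = (g, Γ1 (A0 − μ̄)^{-1} h)_G for all g ∈ G and h ∈ H. -/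
/-!
The inner product formula is the abstract Green identity for `f ∈ ker (T - lam)` and
`g ∈ ker Γt0`, in which the boundary terms reduce to `-(Γ0 f, Γt1 g)`. Since `lam ∈ ρ(A0)`, every
vector of `G` is `Γ0 f` for some `f ∈ ker (T - lam)` (`exists_ker_with_boundary_value`), so
this formula determines `Γt1 g` weakly. The boundedness of `h ↦ Γt1 (Ã0 - conj lam)⁻¹ h` is then
the uniform boundedness principle, applied to the functionals `⟪Γt1 g, ·⟫` on `G` divided by `‖h‖`:
at `Γ0 f` each of them is at most `‖f‖` (`adjoint_gamma_half`). The second half of the theorem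
follows by exchanging the roles of `T` and `Tt`, under which the Green identity is invariant.
-/

open scoped ComplexInnerProductSpace

noncomputable section

variable {H G : Type*}
  [NormedAddCommGroup H] [InnerProductSpace ℂ H] [CompleteSpace H]
  [NormedAddCommGroup G] [InnerProductSpace ℂ G] [CompleteSpace G]

/-- Unfolds surjectivity of `A0 - lam`, where `A0` is the restriction of `T` to `ker Γ0`. -/
lemma InResolventSet.exists_ker_preimage {T : H →ₗ.[ℂ] H} {Γ0 : T.domain →ₗ[ℂ] G} {lam : ℂ}
    (hlam : InResolventSet (T.restrictTo (LinearMap.ker Γ0)) lam) (h : H) :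
    ∃ f : T.domain, Γ0 f = 0 ∧ T f - lam • (f : H) = h := by
  obtain ⟨R, -, hR⟩ := hlam
  obtain ⟨x, -, hx⟩ := hR h
  let e := Submodule.equivMapOfInjective T.domain.subtype (Submodule.injective_subtype _)
    (LinearMap.ker Γ0)
  have hcoe : (((e.symm x : LinearMap.ker Γ0) : T.domain) : H) = (x : H) := by
    have := congrArg Subtype.val (e.apply_symm_apply x)
    rwa [Submodule.coe_equivMapOfInjective_apply] at this
  refine ⟨(e.symm x : LinearMap.ker Γ0), (e.symm x).2, ?_⟩
  rw [hcoe]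
  exact hx

/-- If `lam ∈ ρ(A0)`, then `Γ0` maps `ker (T - lam)` onto `G`. -/
lemma exists_ker_with_boundary_value {T : H →ₗ.[ℂ] H} {Γ0 : T.domain →ₗ[ℂ] G} {lam : ℂ}
    (hsurj : Function.Surjective Γ0)
    (hlam : InResolventSet (T.restrictTo (LinearMap.ker Γ0)) lam) (gg : G) :
    ∃ f : T.domain, T f = lam • (f : H) ∧ Γ0 f = gg := by
  obtain ⟨f₀, rfl⟩ := hsurj gg
  obtain ⟨k, hk0, hk⟩ := hlam.exists_ker_preimage (T f₀ - lam • (f₀ : H))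
  refine ⟨f₀ - k, ?_, by simp [hk0]⟩
  rw [LinearPMap.map_sub, Submodule.coe_sub, smul_sub]
  rw [sub_eq_sub_iff_add_eq_add] at hk ⊢
  rw [add_comm (lam • (f₀ : H)), hk]

/-- One half of the theorem, using only what is invariant under exchanging `T` and `Tt`. -/
lemma adjoint_gamma_half {T Tt : H →ₗ.[ℂ] H}
    {Γ0 Γ1 : T.domain →ₗ[ℂ] G} {Γt0 Γt1 : Tt.domain →ₗ[ℂ] G}
    (green : ∀ (f : T.domain) (g : Tt.domain),
      pinner (T f) (g : H) - pinner (f : H) (Tt g)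
        = pinner (Γ1 f) (Γt0 g) - pinner (Γ0 f) (Γt1 g))
    (hsurj : Function.Surjective Γ0) {lam : ℂ}
    (hlam : InResolventSet (T.restrictTo (LinearMap.ker Γ0)) lam)
    (hlamt : InResolventSet (Tt.restrictTo (LinearMap.ker Γt0)) ((starRingEnd ℂ) lam)) :
    (∀ h : H, ∃ g : Tt.domain, Γt0 g = 0 ∧ Tt g - ((starRingEnd ℂ) lam) • (g : H) = h) ∧
      (∃ C : ℝ, 0 ≤ C ∧ ∀ (h : H) (g : Tt.domain),
        Γt0 g = 0 → Tt g - ((starRingEnd ℂ) lam) • (g : H) = h → ‖Γt1 g‖ ≤ C * ‖h‖) ∧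
      (∀ (gg : G) (h : H) (f : T.domain) (g : Tt.domain),
        T f = lam • (f : H) → Γ0 f = gg →
        Γt0 g = 0 → Tt g - ((starRingEnd ℂ) lam) • (g : H) = h →
        pinner ((f : H)) h = pinner gg (Γt1 g)) := by
  have key : ∀ (gg : G) (h : H) (f : T.domain) (g : Tt.domain),
        T f = lam • (f : H) → Γ0 f = gg →
        Γt0 g = 0 → Tt g - ((starRingEnd ℂ) lam) • (g : H) = h →
        pinner ((f : H)) h = pinner gg (Γt1 g) := by
    rintro gg h f g hf rfl hg rfl
    have hG := green f g
    rw [hf, hg] at hG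
    simp only [pinner, inner_sub_left, inner_smul_left, inner_smul_right, inner_zero_left,
      RingHomCompTriple.comp_apply, RingHom.id_apply] at hG ⊢
    linear_combination -hG
  refine ⟨hlamt.exists_ker_preimage, ?_, key⟩
  let ι := {g : Tt.domain // Γt0 g = 0}
  let N : ι → H := fun g => Tt g.1 - ((starRingEnd ℂ) lam) • (g.1 : H)
  let φ : ι → G →L[ℂ] ℂ := fun g => ((‖N g‖⁻¹ : ℝ) : ℂ) • innerSL ℂ (Γt1 g.1)
  have hbd : ∀ gg : G, ∃ C, ∀ g, ‖φ g gg‖ ≤ C := by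
    intro gg
    obtain ⟨f, hf, hfg⟩ := exists_ker_with_boundary_value hsurj hlam gg
    refine ⟨‖(f : H)‖, fun g => ?_⟩
    have h1 : ⟪N g, (f : H)⟫ = ⟪Γt1 g.1, gg⟫ := key gg _ f g.1 hf hfg g.2 rfl
    have h2 : ‖φ g gg‖ = ‖N g‖⁻¹ * ‖⟪N g, (f : H)⟫‖ := by
      simp [φ, h1]
    rw [h2]
    calc ‖N g‖⁻¹ * ‖⟪N g, (f : H)⟫‖ ≤ ‖N g‖⁻¹ * (‖N g‖ * ‖(f : H)‖) := by
          gcongr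
          exact norm_inner_le_norm _ _
      _ = (‖N g‖⁻¹ * ‖N g‖) * ‖(f : H)‖ := by ring
      _ ≤ 1 * ‖(f : H)‖ := by
          gcongr
          exact inv_mul_le_one
      _ = ‖(f : H)‖ := one_mul _
  obtain ⟨C, hC⟩ := banach_steinhaus hbd
  refine ⟨max C 0, le_max_right _ _, ?_⟩
  rintro h g hg rfl
  by_cases h0 : Tt g - ((starRingEnd ℂ) lam) • (g : H) = 0
  · -- Here the functional is zero by the convention `0⁻¹ = 0`; the weak formula gives `Γt1 g = 0`.
    obtain ⟨f, hf, hfg⟩ := exists_ker_with_boundary_value hsurj hlam (Γt1 g)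
    have h1 := key _ _ f g hf hfg hg h0
    simp only [pinner, inner_zero_left] at h1
    rw [h0, inner_self_eq_zero.mp h1.symm]
    simp
  · have hpos := norm_pos_iff.mpr h0
    have h1 : ‖φ ⟨g, hg⟩‖
        = ‖Tt g - ((starRingEnd ℂ) lam) • (g : H)‖⁻¹ * ‖Γt1 g‖ := by
      simp [φ, N, norm_smul]
    have h2 := (hC ⟨g, hg⟩).trans (le_max_left C 0)
    rwa [h1, inv_mul_le_iff₀ hpos, mul_comm] at h2

theorem stmt8
    (S St T Tt : H →ₗ.[ℂ] H)
    (Γ0 Γ1 : T.domain →ₗ[ℂ] G) (Γt0 Γt1 : Tt.domain →ₗ[ℂ] G)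
    (hgbt : IsGeneralizedBoundaryTriple S St T Tt Γ0 Γ1 Γt0 Γt1)
    (lam mu : ℂ)
    (hlam : InResolventSet (T.restrictTo (LinearMap.ker Γ0)) lam)
    (hlamt : InResolventSet (Tt.restrictTo (LinearMap.ker Γt0)) ((starRingEnd ℂ) lam))
    (hmu : InResolventSet (Tt.restrictTo (LinearMap.ker Γt0)) mu)
    (hmut : InResolventSet (T.restrictTo (LinearMap.ker Γ0)) ((starRingEnd ℂ) mu)) :
    ((∀ h : H, ∃ g : Tt.domain, Γt0 g = 0 ∧ Tt g - ((starRingEnd ℂ) lam) • (g : H) = h) ∧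
      (∃ C : ℝ, 0 ≤ C ∧ ∀ (h : H) (g : Tt.domain),
        Γt0 g = 0 → Tt g - ((starRingEnd ℂ) lam) • (g : H) = h → ‖Γt1 g‖ ≤ C * ‖h‖) ∧
      (∀ (gg : G) (h : H) (f : T.domain) (g : Tt.domain),
        T f = lam • (f : H) → Γ0 f = gg →
        Γt0 g = 0 → Tt g - ((starRingEnd ℂ) lam) • (g : H) = h →
        pinner ((f : H)) h = pinner gg (Γt1 g))) ∧
    ((∀ h : H, ∃ f : T.domain, Γ0 f = 0 ∧ T f - ((starRingEnd ℂ) mu) • (f : H) = h) ∧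
      (∃ C : ℝ, 0 ≤ C ∧ ∀ (h : H) (f : T.domain),
        Γ0 f = 0 → T f - ((starRingEnd ℂ) mu) • (f : H) = h → ‖Γ1 f‖ ≤ C * ‖h‖) ∧
      (∀ (gg : G) (h : H) (g : Tt.domain) (f : T.domain),
        Tt g = mu • (g : H) → Γt0 g = gg →
        Γ0 f = 0 → T f - ((starRingEnd ℂ) mu) • (f : H) = h →
        pinner ((g : H)) h = pinner gg (Γ1 f))) := by
  refine ⟨adjoint_gamma_half hgbt.green hgbt.surj_Γ0 hlam hlamt,
    adjoint_gamma_half (Γ1 := Γt1) (fun g f => ?_) hgbt.surj_Γt0 hmu hmut⟩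
  have hG := congrArg (starRingEnd ℂ) (hgbt.green f g)
  simp only [pinner, map_sub, inner_conj_symm] at hG ⊢
  linear_combination -hG

end
end

section
/- Let {G, (Γ0, Γ1), (Γ̃0, Γ̃1)} be a generalized boundary triple for the adjoint pair {S, S̃} with core {T, T̃} of {S*, S̃*}, assume ρ(A0) ≠ ∅, and let γ, γ̃ and M, M̃ be the associated γ-fields and Weyl functions. Then for all λ ∈ ρ(A0), μ ∈ ρ(Ã0) and all h, k ∈ G one has (M(λ)h, k)_G = (h, M̃(λ̄)k)_G (that is, M(λ) = M̃(λ̄)* and M̃(μ) = M(μ̄)*), and (M(λ)h, k)_G − (h, M̃(μ)k)_G = (λ − μ̄) (γ(λ)h, γ̃(μ)k)_H. -/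
/-!
For `f ∈ ker (T - λ)` and `g ∈ ker (Tt - μ)` the left-hand side of the abstract Green identity
collapses to `(λ - μ̄) (f, g)`; this is the identity for the difference of the Weyl functions
(`green_eigenvectors`). At `μ = λ̄` the factor vanishes, which gives the adjointness relations.
-/

open scoped ComplexInnerProductSpace

noncomputable section

variable {H G : Type*}
  [NormedAddCommGroup H] [InnerProductSpace ℂ H] [CompleteSpace H]
  [NormedAddCommGroup G] [InnerProductSpace ℂ G] [CompleteSpace G]

/-- The Green identity evaluated on eigenvectors `f` of `T` and `g` of `Tt`. -/
theorem green_eigenvectors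
    {S St T Tt : H →ₗ.[ℂ] H}
    {Γ0 Γ1 : T.domain →ₗ[ℂ] G} {Γt0 Γt1 : Tt.domain →ₗ[ℂ] G}
    (hgbt : IsGeneralizedBoundaryTriple S St T Tt Γ0 Γ1 Γt0 Γt1)
    {a b : ℂ} {f : T.domain} {g : Tt.domain}
    (hf : T f = a • (f : H)) (hg : Tt g = b • (g : H)) :
    pinner (Γ1 f) (Γt0 g) - pinner (Γ0 f) (Γt1 g)
      = (a - (starRingEnd ℂ) b) * pinner (f : H) (g : H) := by
  rw [← hgbt.green f g, hf, hg]
  simp only [pinner, inner_smul_left, inner_smul_right]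
  ring

theorem stmt10
    (S St T Tt : H →ₗ.[ℂ] H)
    (Γ0 Γ1 : T.domain →ₗ[ℂ] G) (Γt0 Γt1 : Tt.domain →ₗ[ℂ] G)
    (hgbt : IsGeneralizedBoundaryTriple S St T Tt Γ0 Γ1 Γt0 Γt1)
    (lam mu : ℂ)
    (hlam : InResolventSet (T.restrictTo (LinearMap.ker Γ0)) lam)
    (hmu : InResolventSet (Tt.restrictTo (LinearMap.ker Γt0)) mu) :
    (∀ (h k : G) (f : T.domain) (g : Tt.domain),
        T f = lam • (f : H) → Γ0 f = h →
        Tt g = ((starRingEnd ℂ) lam) • (g : H) → Γt0 g = k →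
        pinner (Γ1 f) k = pinner h (Γt1 g)) ∧
    (∀ (h k : G) (g : Tt.domain) (f : T.domain),
        Tt g = mu • (g : H) → Γt0 g = k →
        T f = ((starRingEnd ℂ) mu) • (f : H) → Γ0 f = h →
        pinner (Γt1 g) h = pinner k (Γ1 f)) ∧
    (∀ (h k : G) (f : T.domain) (g : Tt.domain),
        T f = lam • (f : H) → Γ0 f = h →
        Tt g = mu • (g : H) → Γt0 g = k →
        pinner (Γ1 f) k - pinner h (Γt1 g)
          = (lam - (starRingEnd ℂ) mu) * pinner ((f : H)) ((g : H))) := by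
  refine ⟨?_, ?_, ?_⟩
  · rintro _ _ f g hf rfl hg rfl
    have key := green_eigenvectors hgbt hf hg
    rw [Complex.conj_conj, sub_self, zero_mul] at key
    exact sub_eq_zero.mp key
  · rintro _ _ g f hg rfl hf rfl
    have key := green_eigenvectors hgbt hf hg
    rw [sub_self, zero_mul] at key
    -- The claim is the complex conjugate of the vanishing of the Green form.
    have conj_key := congrArg (starRingEnd ℂ) (sub_eq_zero.mp key)
    simp only [pinner, inner_conj_symm] at conj_key
    exact conj_key.symm
  · rintro _ _ f g hf rfl hg rfl
    exact green_eigenvectors hgbt hf hg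

end
end

section
/- Let {G, (Γ0, Γ1), (Γ̃0, Γ̃1)} be a generalized boundary triple for the adjoint pair {S, S̃} with core {T, T̃} of {S*, S̃*}, assume ρ(A0) ≠ ∅, let γ and M be the associated γ-field and Weyl function, and let B be a linear operator in G. Let λ ∈ ρ(A0) be such that λ is not an eigenvalue of A_B, and let f ∈ H. Set w := Γ1 (A0 − λ)^{-1} f (which equals γ̃(λ̄)* f). Assume that w ∈ dom B and that there exists h ∈ G with M(λ)h ∈ dom B and h − B M(λ)h = B w. Then f ∈ ran(A_B − λ), and the unique g ∈ dom A_B with (A_B − λ)g = f is given by g = (A0 − λ)^{-1} f + γ(λ)h. -/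
/-!
Put `g = u + γ(λ)h` with `u = (A0 - λ)⁻¹ f`. Since `Γ0 u = 0` and `Γ0 γ(λ)h = h`, the equation
`h - B M(λ)h = B w` says exactly that `B Γ1 g = B w + B M(λ)h = h = Γ0 g`, so `g ∈ dom A_B`; and
`(T - λ)g = f` because `γ(λ)h ∈ ker (T - λ)`. Two solutions in `dom A_B` differ by an element of
`ker (A_B - λ)`, which is trivial because `λ` is not an eigenvalue of `A_B`.
-/

open scoped ComplexInnerProductSpace

noncomputable section

variable {H G : Type*}
  [NormedAddCommGroup H] [InnerProductSpace ℂ H] [CompleteSpace H]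
  [NormedAddCommGroup G] [InnerProductSpace ℂ G] [CompleteSpace G]

theorem stmt13
    (S St T Tt : H →ₗ.[ℂ] H)
    (Γ0 Γ1 : T.domain →ₗ[ℂ] G) (Γt0 Γt1 : Tt.domain →ₗ[ℂ] G)
    (hgbt : IsGeneralizedBoundaryTriple S St T Tt Γ0 Γ1 Γt0 Γt1)
    (B : G →ₗ.[ℂ] G) (lam : ℂ)
    (hlam : InResolventSet (T.restrictTo (LinearMap.ker Γ0)) lam)
    (gam : G → T.domain)
    (hgam : ∀ k : G, T (gam k) = lam • ((gam k : H)) ∧ Γ0 (gam k) = k)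
    (hnotev : ¬ ∃ f : T.domain, f ≠ 0 ∧ T f = lam • (f : H) ∧
      ∃ hb : Γ1 f ∈ B.domain, B ⟨Γ1 f, hb⟩ = Γ0 f)
    (f : H) (u : T.domain) (hu0 : Γ0 u = 0) (huf : T u - lam • (u : H) = f)
    (hw : Γ1 u ∈ B.domain)
    (h : G) (hm : Γ1 (gam h) ∈ B.domain)
    (hh : h - B ⟨Γ1 (gam h), hm⟩ = B ⟨Γ1 u, hw⟩) :
    (∃ hb : Γ1 (u + gam h) ∈ B.domain, B ⟨Γ1 (u + gam h), hb⟩ = Γ0 (u + gam h)) ∧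
    T (u + gam h) - lam • ((u + gam h : T.domain) : H) = f ∧
    (∀ g' : T.domain, (∃ hb : Γ1 g' ∈ B.domain, B ⟨Γ1 g', hb⟩ = Γ0 g') →
      T g' - lam • (g' : H) = f → g' = u + gam h) := by
  have hB : ∃ hb : Γ1 (u + gam h) ∈ B.domain, B ⟨Γ1 (u + gam h), hb⟩ = Γ0 (u + gam h) := by
    have hmem : Γ1 (u + gam h) ∈ B.domain := by
      rw [map_add]
      exact B.domain.add_mem hw hm
    refine ⟨hmem, ?_⟩
    have hsplit : (⟨Γ1 (u + gam h), hmem⟩ : B.domain) = ⟨Γ1 u, hw⟩ + ⟨Γ1 (gam h), hm⟩ :=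
      Subtype.ext (map_add Γ1 u (gam h))
    rw [hsplit, LinearPMap.map_add, ← hh, map_add, hu0, (hgam h).2]
    abel
  have hT : T (u + gam h) - lam • ((u + gam h : T.domain) : H) = f := by
    rw [LinearPMap.map_add, (hgam h).1, Submodule.coe_add, smul_add, ← huf]
    abel
  refine ⟨hB, hT, ?_⟩
  rintro g' ⟨hb', hB'⟩ hT'
  obtain ⟨hb, hB⟩ := hB
  by_contra hne
  -- Otherwise the difference of the two solutions is an eigenvector of `A_B` for `lam`.
  refine hnotev ⟨g' - (u + gam h), sub_ne_zero.mpr hne, ?_, ?_⟩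
  · rw [LinearPMap.map_sub, Submodule.coe_sub, smul_sub, ← sub_eq_zero,
      sub_sub_sub_comm, hT', hT, sub_self]
  · have hmem : Γ1 (g' - (u + gam h)) ∈ B.domain := by
      rw [map_sub]
      exact B.domain.sub_mem hb' hb
    refine ⟨hmem, ?_⟩
    have hsplit : (⟨Γ1 (g' - (u + gam h)), hmem⟩ : B.domain)
        = ⟨Γ1 g', hb'⟩ - ⟨Γ1 (u + gam h), hb⟩ :=
      Subtype.ext (map_sub Γ1 g' (u + gam h))
    rw [hsplit, LinearPMap.map_sub, hB', hB, map_sub]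

end
end
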